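/- arXiv:1408.6618 — 6 statements merged into one kernel-verified Lean document; each statement's English description precedes it below -/
import Mathlib

section
/- For every nonempty theory O of classifiers and every sample of n distinct points x⃗, one minus the soft falsifiability of O on x⃗ is at most √8 times the square root of one minus the hard falsifiability of O on x⃗: 1 − F(O|x⃗) ≤ √8 · √(1 − G(O|x⃗)). Equivalently, the empirical Rademacher complexity satisfies Radem(O|x⃗) ≤ 2√2 · √(log₂|q(O)| / n). (This is the data-dependent form of the main theorem for statistical learning.) -/
/-!
The bound is Massart's finite class lemma. For each labeling `σ`, both the risk and the supremum
in the Rademacher complexity are attained, at some labeling `g σ` in the finite set `q(O)`, and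
`1 - 2 · risk` is the normalized correlation of `σ` with `g σ`. So both `1 - F` and the Rademacher
complexity are averages over `σ` of `(1/n) ∑ σ_t (g σ)_t`, and it is enough to bound such an average
for an arbitrary selection `g` with values in a finite set `Q` (`massart`).

Writing `A` for the average of `∑ σ_t (g σ)_t`, Jensen's inequality and a union bound give
`exp (l A) ≤ ∑_{v ∈ Q} E exp (l ∑ σ_t v_t) = |Q| (cosh l)^n ≤ |Q| exp (n l² / 2)`, and `l = A / n`
gives `A² ≤ 2 n log |Q| ≤ 8 n log₂ |Q|`. The hard falsifiability is expressed through `|q(O)|` because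
the labelings of risk zero are exactly those in `q(O)`.
-/

open Finset

noncomputable section

/-- Signs: `true ↦ +1`, `false ↦ -1`. -/
def sgn (b : Bool) : ℝ := if b then 1 else -1

/-- The set of labelings realized by the theory `O` on the sample `x`. -/
def qproj {X : Type*} (n : ℕ) (x : Fin n → X) (O : Set (X → Bool)) :
    Set (Fin n → Bool) :=
  {v | ∃ f ∈ O, ∀ t, v t = f (x t)}

/-- The risk of the theory `O` on the labeling `σ`. -/
def risk {X : Type*} (n : ℕ) (x : Fin n → X) (O : Set (X → Bool))
    (σ : Fin n → Bool) : ℝ :=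
  sInf ((fun v => ((Finset.univ.filter fun t => v t ≠ σ t).card : ℝ) / n) '' qproj n x O)

/-- Soft falsifiability of `O` on `x`. -/
def softF {X : Type*} (n : ℕ) (x : Fin n → X) (O : Set (X → Bool)) : ℝ :=
  2 / 2 ^ n * ∑ σ : Fin n → Bool, risk n x O σ

/-- Hard falsifiability of `O` on `x`. -/
def hardF {X : Type*} (n : ℕ) (x : Fin n → X) (O : Set (X → Bool)) : ℝ :=
  1 - Real.logb 2 ({σ : Fin n → Bool | risk n x O σ = 0}.ncard) / n

/-- Empirical Rademacher complexity of `O` on `x`. -/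
def radem {X : Type*} (n : ℕ) (x : Fin n → X) (O : Set (X → Bool)) : ℝ :=
  ((2 : ℝ) ^ n)⁻¹ * ∑ ζ : Fin n → Bool,
    sSup ((fun f => (n : ℝ)⁻¹ * ∑ t, sgn (ζ t) * sgn (f (x t))) '' O)

/-- Empirical Rademacher complexity of the loss class of `O` on `x` with labels `y`. -/
def rademLoss {X : Type*} (n : ℕ) (x : Fin n → X) (y : Fin n → Bool)
    (O : Set (X → Bool)) : ℝ :=
  ((2 : ℝ) ^ n)⁻¹ * ∑ ζ : Fin n → Bool,
    sSup ((fun f => (n : ℝ)⁻¹ * ∑ t, sgn (ζ t) * (if f (x t) ≠ y t then (1 : ℝ) else 0)) '' O)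

/-- `2 ^ n` times the moment generating function of `∑ σ_t v_t`, for uniformly random `σ` and fixed
signs `v`: the summands are independent signs whatever `v` is. -/
lemma sum_exp_corr (n : ℕ) (l : ℝ) (v : Fin n → Bool) :
    ∑ σ : Fin n → Bool, Real.exp (l * ∑ t, sgn (σ t) * sgn (v t)) = (2 * Real.cosh l) ^ n := by
  have h : ∀ σ : Fin n → Bool, Real.exp (l * ∑ t, sgn (σ t) * sgn (v t))
      = ∏ t, Real.exp (l * (sgn (σ t) * sgn (v t))) := fun σ => by
    rw [Finset.mul_sum, Real.exp_sum]
  simp_rw [h]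
  rw [← Fintype.prod_sum (fun t b => Real.exp (l * (sgn b * sgn (v t))))]
  have h2 : ∀ t, ∑ b : Bool, Real.exp (l * (sgn b * sgn (v t))) = 2 * Real.cosh l := by
    intro t
    rw [Real.cosh_eq]
    cases v t <;> simp [sgn] <;> ring
  rw [Finset.prod_congr rfl fun t _ => h2 t, Finset.prod_const, Finset.card_univ, Fintype.card_fin]

/-- Massart's finite class lemma, for an arbitrary selection `g` with values in `Q`. -/
lemma massart (n : ℕ) (hn : 1 ≤ n) (Q : Finset (Fin n → Bool))
    (g : (Fin n → Bool) → (Fin n → Bool)) (hg : ∀ σ, g σ ∈ Q) :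
    ((2 : ℝ) ^ n)⁻¹ * ∑ σ, (n : ℝ)⁻¹ * ∑ t, sgn (σ t) * sgn (g σ t) ≤
      2 * Real.sqrt 2 * Real.sqrt (Real.logb 2 Q.card / n) := by
  have hn0 : (0 : ℝ) < n := by exact_mod_cast hn
  have hQ : (1 : ℝ) ≤ Q.card := by exact_mod_cast Finset.card_pos.mpr ⟨_, hg fun _ => true⟩
  set A : ℝ := ∑ σ : Fin n → Bool, ((2 : ℝ) ^ n)⁻¹ * ∑ t, sgn (σ t) * sgn (g σ t) with hA
  have hlhs : ((2 : ℝ) ^ n)⁻¹ * ∑ σ, (n : ℝ)⁻¹ * ∑ t, sgn (σ t) * sgn (g σ t) = A / n := by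
    rw [hA, ← Finset.mul_sum, ← Finset.mul_sum]
    ring
  rw [hlhs]
  rcases le_or_gt A 0 with hA0 | hA0
  · exact (div_nonpos_of_nonpos_of_nonneg hA0 hn0.le).trans (by positivity)
  have key : ∀ l : ℝ, l * A ≤ Real.log Q.card + n * (l ^ 2 / 2) := by
    intro l
    have jensen : Real.exp (l * A) ≤
        ∑ σ, ((2 : ℝ) ^ n)⁻¹ * Real.exp (l * ∑ t, sgn (σ t) * sgn (g σ t)) := by
      have := convexOn_exp.map_sum_le (t := (Finset.univ : Finset (Fin n → Bool)))
        (w := fun _ => ((2 : ℝ) ^ n)⁻¹) (p := fun σ => l * ∑ t, sgn (σ t) * sgn (g σ t))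
        (fun _ _ => by positivity) (by simp) (fun _ _ => Set.mem_univ _)
      simp only [smul_eq_mul] at this
      refine le_of_eq_of_le ?_ this
      rw [hA, Finset.mul_sum]
      congr 1
      exact Finset.sum_congr rfl fun σ _ => by ring
    have union : ∑ σ, ((2 : ℝ) ^ n)⁻¹ * Real.exp (l * ∑ t, sgn (σ t) * sgn (g σ t)) ≤
        Q.card * Real.cosh l ^ n := by
      calc _ ≤ ∑ σ : Fin n → Bool, ((2 : ℝ) ^ n)⁻¹ *
            ∑ v ∈ Q, Real.exp (l * ∑ t, sgn (σ t) * sgn (v t)) := by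
            gcongr with σ
            exact Finset.single_le_sum
              (f := fun v : Fin n → Bool => Real.exp (l * ∑ t, sgn (σ t) * sgn (v t)))
              (fun v _ => (Real.exp_pos _).le) (hg σ)
        _ = _ := by
            rw [← Finset.mul_sum, Finset.sum_comm]
            simp_rw [sum_exp_corr]
            rw [Finset.sum_const, nsmul_eq_mul, mul_pow]
            field_simp
    have hcosh : Real.cosh l ^ n ≤ Real.exp (n * (l ^ 2 / 2)) := by
      rw [Real.exp_nat_mul]
      exact pow_le_pow_left₀ (Real.cosh_pos l).le (Real.cosh_le_exp_half_sq l) n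
    have hexp : Real.exp (l * A) ≤ Q.card * Real.exp (n * (l ^ 2 / 2)) :=
      jensen.trans (union.trans (by gcongr))
    have := Real.log_le_log (Real.exp_pos _) hexp
    rwa [Real.log_exp, Real.log_mul (by positivity) (Real.exp_pos _).ne', Real.log_exp] at this
  have hlog : Real.log Q.card ≤ Real.logb 2 Q.card := by
    rw [Real.logb]
    exact le_div_self (Real.log_nonneg hQ) (Real.log_pos (by norm_num))
      (by linarith [Real.log_two_lt_d9])
  have hL : 0 ≤ Real.log Q.card := Real.log_nonneg hQ
  -- the optimal parameter of the Chernoff bound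
  have h1 := key (A / n)
  have h2 : (A / n) ^ 2 ≤ 8 * (Real.logb 2 Q.card / n) := by
    have e1 : A / n * A = n * (A / n) ^ 2 := by field_simp
    rw [← mul_div_assoc, le_div_iff₀ hn0]
    nlinarith
  have h3 : 2 * Real.sqrt 2 = Real.sqrt 8 := by
    rw [show (8 : ℝ) = 2 ^ 2 * 2 by norm_num, Real.sqrt_mul (by norm_num),
      Real.sqrt_sq (by norm_num)]
  rw [h3, ← Real.sqrt_mul (by norm_num)]
  exact Real.le_sqrt_of_sq_le h2

lemma qproj_nonempty {X : Type*} (n : ℕ) (x : Fin n → X) (O : Set (X → Bool))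
    (hO : O.Nonempty) : (qproj n x O).Nonempty :=
  hO.elim fun f hf => ⟨fun t => f (x t), f, hf, fun _ => rfl⟩

/-- The infimum defining the risk is attained. -/
lemma exists_risk_eq {X : Type*} (n : ℕ) (x : Fin n → X) (O : Set (X → Bool))
    (hO : O.Nonempty) (σ : Fin n → Bool) : ∃ v ∈ qproj n x O,
      ((Finset.univ.filter fun t => v t ≠ σ t).card : ℝ) / n = risk n x O σ :=
  ((qproj_nonempty n x O hO).image _).csInf_mem ((Set.toFinite _).image _)

/-- The labelings of risk zero are exactly the realized ones. -/
lemma risk_eq_zero {X : Type*} (n : ℕ) (hn : 1 ≤ n) (x : Fin n → X) (O : Set (X → Bool))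
    (hO : O.Nonempty) : {σ : Fin n → Bool | risk n x O σ = 0} = qproj n x O := by
  have hn0 : (n : ℝ) ≠ 0 := by positivity
  ext σ
  obtain ⟨v, hv, hvr⟩ := exists_risk_eq n x O hO σ
  simp only [Set.mem_ofPred_eq]
  constructor
  · intro h
    rw [h, div_eq_zero_iff, or_iff_left hn0, Nat.cast_eq_zero, Finset.card_eq_zero,
      Finset.filter_eq_empty_iff] at hvr
    have : v = σ := funext fun t => not_not.mp (hvr (Finset.mem_univ t))
    exact this ▸ hv
  · intro h
    apply le_antisymm
    · exact csInf_le ((Set.toFinite _).image _).bddBelow ⟨σ, h, by simp⟩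
    · rw [← hvr]
      positivity

lemma corr_eq (n : ℕ) (hn : 1 ≤ n) (v σ : Fin n → Bool) :
    (n : ℝ)⁻¹ * ∑ t, sgn (σ t) * sgn (v t) =
      1 - 2 * (((Finset.univ.filter fun t => v t ≠ σ t).card : ℝ) / n) := by
  have hn0 : (n : ℝ) ≠ 0 := by positivity
  have h : ∀ t, sgn (σ t) * sgn (v t) = 1 - 2 * (if v t ≠ σ t then (1 : ℝ) else 0) := by
    intro t
    cases σ t <;> cases v t <;> norm_num [sgn]
  simp_rw [h]
  rw [Finset.sum_sub_distrib, ← Finset.mul_sum, Finset.sum_boole]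
  simp only [Finset.sum_const, Finset.card_univ, Fintype.card_fin, nsmul_eq_mul, mul_one]
  field_simp

/-- Main theorem (SLT), data-dependent form:
`1 − F(O|x) ≤ √8·√(1 − G(O|x))`; equivalently
`Radem(O|x) ≤ 2√2·√(log₂|q(O)|/n)`. -/
theorem stmt_0 {X : Type*} (n : ℕ) (hn : 1 ≤ n) (x : Fin n → X)
    (hx : Function.Injective x) (O : Set (X → Bool)) (hO : O.Nonempty) :
    1 - softF n x O ≤ Real.sqrt 8 * Real.sqrt (1 - hardF n x O) ∧
    radem n x O ≤ 2 * Real.sqrt 2 *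
      Real.sqrt (Real.logb 2 ((qproj n x O).ncard) / n) := by
  have hfin : (qproj n x O).Finite := Set.toFinite _
  have hcard : (qproj n x O).ncard = hfin.toFinset.card := Set.ncard_eq_toFinset_card _ hfin
  constructor
  · choose g hg hgr using exists_risk_eq n x O hO
    have h8 : Real.sqrt 8 = 2 * Real.sqrt 2 := by
      rw [show (8 : ℝ) = 2 ^ 2 * 2 by norm_num, Real.sqrt_mul (by norm_num),
        Real.sqrt_sq (by norm_num)]
    rw [hardF, risk_eq_zero n hn x O hO, sub_sub_cancel, hcard, h8]
    refine le_of_eq_of_le ?_ (massart n hn hfin.toFinset g fun σ => hfin.mem_toFinset.mpr (hg σ))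
    simp_rw [corr_eq n hn, hgr]
    rw [softF, Finset.sum_sub_distrib, ← Finset.mul_sum]
    simp only [Finset.sum_const, Finset.card_univ, Fintype.card_pi, Fintype.card_bool,
      Finset.prod_const, Fintype.card_fin, nsmul_eq_mul, mul_one, Nat.cast_pow, Nat.cast_ofNat]
    field_simp
  · have hatt : ∀ ζ : Fin n → Bool, ∃ v ∈ qproj n x O,
        (n : ℝ)⁻¹ * ∑ t, sgn (ζ t) * sgn (v t) =
          sSup ((fun f => (n : ℝ)⁻¹ * ∑ t, sgn (ζ t) * sgn (f (x t))) '' O) := by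
      intro ζ
      -- `O` may be infinite, but the correlation factors through the finite set `q(O)`.
      have himg : (fun f : X → Bool => (n : ℝ)⁻¹ * ∑ t, sgn (ζ t) * sgn (f (x t))) '' O ⊆
          (fun v : Fin n → Bool => (n : ℝ)⁻¹ * ∑ t, sgn (ζ t) * sgn (v t)) '' qproj n x O := by
        rintro _ ⟨f, hf, rfl⟩
        exact ⟨fun t => f (x t), ⟨f, hf, fun _ => rfl⟩, rfl⟩
      exact himg ((hO.image _).csSup_mem ((hfin.image _).subset himg))
    choose g hg hgr using hatt
    rw [radem, hcard]
    simp_rw [← hgr]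
    exact massart n hn hfin.toFinset g fun σ => hfin.mem_toFinset.mpr (hg σ)
end
end

section
/- The soft falsifiability of a theory O on a sample x⃗ of n distinct points equals one minus twice the Rademacher complexity of the loss class, which equals one minus the empirical Rademacher complexity of O: F(O|x⃗) = 1 − 2·Radem(ℓ(O)|x⃗,y) for every y ∈ {−1,+1}^n, and F(O|x⃗) = 1 − Radem(O|x⃗). -/
/-!
Write `d(f, σ)` for the fraction of sample points at which `f` disagrees with `σ`, so that the
risk of `σ` is `inf_f d(f, σ)`.

* Pointwise in `ζ`, the correlation `(1/n) ∑ ζ_t f(x_t)` equals `1 - 2 d(f, ζ)`. Taking suprema turns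
  it into `1 - 2 R(ζ)`, and averaging over `ζ` gives `1 - F`.
* Pointwise in `ζ`, the correlation of `ζ` with the loss equals `(1/n) #{t : ζ_t = +1} - d(f, -ζ y)`,
  where `-ζ y` is encoded as `xor (y t) (ζ t)`. Taking suprema gives
  `(1/n) #{t : ζ_t = +1} - R(-ζ y)`. The first term averages to `1/2` by the symmetry `ζ ↦ -ζ`, and
  the second averages to `F / 2` because `ζ ↦ -ζ y` permutes the cube.

Both steps pass from suprema to infima through `sSup_affine_image`.
-/

open Finset

noncomputable section

/-- The fraction of sample points at which `f` disagrees with the labeling `σ`. -/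
def disagreement {X : Type*} (n : ℕ) (x : Fin n → X) (σ : Fin n → Bool) (f : X → Bool) : ℝ :=
  (n : ℝ)⁻¹ * ∑ t, (if f (x t) ≠ σ t then (1 : ℝ) else 0)

lemma disagreement_nonneg {X : Type*} (n : ℕ) (x : Fin n → X) (σ : Fin n → Bool) (f : X → Bool) :
    0 ≤ disagreement n x σ f :=
  mul_nonneg (by positivity) (Finset.sum_nonneg fun t _ => by split_ifs <;> norm_num)

lemma risk_eq_sInf_disagreement {X : Type*} (n : ℕ) (x : Fin n → X) (O : Set (X → Bool))
    (σ : Fin n → Bool) : risk n x O σ = sInf (disagreement n x σ '' O) := by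
  have hq : qproj n x O = (fun f t => f (x t)) '' O := by
    ext v
    simp only [qproj, Set.mem_ofPred_eq, Set.mem_image, funext_iff, eq_comm]
  rw [risk, hq, Set.image_image]
  congr 1
  refine Set.image_congr fun f _ => ?_
  simp only [disagreement, Finset.sum_boole]
  rw [div_eq_inv_mul]

/-- The supremum over a theory of a decreasing affine function of the disagreement with `σ` is
that affine function of the risk. -/
lemma sSup_affine_image {X : Type*} (n : ℕ) (x : Fin n → X) (O : Set (X → Bool)) (hO : O.Nonempty)
    (σ : Fin n → Bool) (b c : ℝ) (hb : 0 ≤ b) :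
    sSup ((fun f => c - b * disagreement n x σ f) '' O) = c - b * risk n x O σ := by
  have hanti : Antitone fun r : ℝ => c - b * r := fun r s h =>
    sub_le_sub_left (mul_le_mul_of_nonneg_left h hb) c
  have hbdd : BddBelow (disagreement n x σ '' O) := by
    refine ⟨0, ?_⟩
    rintro _ ⟨f, -, rfl⟩
    exact disagreement_nonneg n x σ f
  have h := hanti.map_csInf_of_continuousAt (by fun_prop) (hO.image (disagreement n x σ)) hbdd
  rw [Set.image_image] at h
  rw [risk_eq_sInf_disagreement]
  exact h.symm

lemma correlation_eq {X : Type*} (n : ℕ) (hn : 1 ≤ n) (x : Fin n → X) (ζ : Fin n → Bool)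
    (f : X → Bool) :
    (n : ℝ)⁻¹ * ∑ t, sgn (ζ t) * sgn (f (x t)) = 1 - 2 * disagreement n x ζ f := by
  have hn0 : (n : ℝ) ≠ 0 := by exact_mod_cast (by omega : n ≠ 0)
  have h : ∀ t, sgn (ζ t) * sgn (f (x t)) = 1 - 2 * (if f (x t) ≠ ζ t then (1 : ℝ) else 0) := by
    intro t
    cases ζ t <;> cases f (x t) <;> norm_num [sgn]
  simp only [h, Finset.sum_sub_distrib, ← Finset.mul_sum, disagreement]
  simp only [Finset.sum_const, Finset.card_univ, Fintype.card_fin, nsmul_eq_mul, mul_one]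
  field_simp

lemma loss_correlation_eq {X : Type*} (n : ℕ) (x : Fin n → X) (y ζ : Fin n → Bool) (f : X → Bool) :
    (n : ℝ)⁻¹ * ∑ t, sgn (ζ t) * (if f (x t) ≠ y t then (1 : ℝ) else 0) =
      (n : ℝ)⁻¹ * ∑ t, (1 + sgn (ζ t)) / 2
        - 1 * disagreement n x (fun t => xor (y t) (ζ t)) f := by
  have h : ∀ t, sgn (ζ t) * (if f (x t) ≠ y t then (1 : ℝ) else 0) =
      (1 + sgn (ζ t)) / 2 - (if f (x t) ≠ xor (y t) (ζ t) then (1 : ℝ) else 0) := by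
    intro t
    cases ζ t <;> cases f (x t) <;> cases y t <;> norm_num [sgn]
  simp only [h, Finset.sum_sub_distrib, disagreement]
  ring

/-- Translation by `y` permutes the cube, so it preserves sums over the cube. -/
lemma sum_xor {n : ℕ} (y : Fin n → Bool) (g : (Fin n → Bool) → ℝ) :
    ∑ ζ : Fin n → Bool, g (fun t => xor (y t) (ζ t)) = ∑ σ, g σ := by
  have hinv : Function.Involutive fun (ζ : Fin n → Bool) t => xor (y t) (ζ t) := by
    intro ζ
    funext t
    simp
  exact Equiv.sum_comp hinv.toPerm g

lemma sum_sgn {n : ℕ} (t : Fin n) : ∑ ζ : Fin n → Bool, sgn (ζ t) = 0 := by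
  have h := sum_xor (fun _ => true) fun ζ : Fin n → Bool => sgn (ζ t)
  have hneg : ∀ b : Bool, sgn (xor true b) = -sgn b := by
    intro b
    cases b <;> norm_num [sgn]
  simp only [hneg, Finset.sum_neg_distrib] at h
  linarith

/-- On average, half of the signs are positive. -/
lemma sum_positive_fraction (n : ℕ) (hn : 1 ≤ n) :
    ∑ ζ : Fin n → Bool, (n : ℝ)⁻¹ * ∑ t, (1 + sgn (ζ t)) / 2 = 2 ^ n / 2 := by
  have hn0 : (n : ℝ) ≠ 0 := by exact_mod_cast (by omega : n ≠ 0)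
  rw [← Finset.mul_sum, Finset.sum_comm]
  simp only [← Finset.sum_div, Finset.sum_add_distrib, sum_sgn]
  simp
  field_simp

/-- Soft falsifiability equals one minus twice the Rademacher
complexity of the loss class (for every label vector `y`), which equals one minus
the empirical Rademacher complexity of `O`. -/
theorem stmt_2 {X : Type*} (n : ℕ) (hn : 1 ≤ n) (x : Fin n → X)
    (hx : Function.Injective x) (O : Set (X → Bool)) (hO : O.Nonempty) :
    (∀ y : Fin n → Bool, softF n x O = 1 - 2 * rademLoss n x y O) ∧
    softF n x O = 1 - radem n x O := by
  have h2 : (2 : ℝ) ^ n ≠ 0 := by positivity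
  refine ⟨fun y => ?_, ?_⟩
  · simp only [rademLoss, softF, loss_correlation_eq]
    simp only [sSup_affine_image n x O hO _ 1 _ zero_le_one, Finset.sum_sub_distrib,
      ← Finset.mul_sum, sum_xor y (risk n x O)]
    have h := sum_positive_fraction n hn
    rw [← Finset.mul_sum] at h
    rw [h]
    field_simp
    ring
  · simp only [radem, softF, correlation_eq n hn]
    simp only [sSup_affine_image n x O hO _ 2 1 zero_le_two, Finset.sum_sub_distrib,
      ← Finset.mul_sum]
    simp
    field_simp
    ring
end
end

section
/- For every theory O and every X-valued tree x⃗ of depth n, there exists a zero-cover of O on x⃗ of cardinality |q̃(O,x⃗)|; hence the sequential covering number is bounded above by the cardinality of the lifted projection: Cover_seq(O,x⃗) ≤ |q̃(O,x⃗)|. -/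
open Finset

noncomputable section

/-- The point of the tree `x` visited at time `t` along the path `ω`. -/
def node {X : Type*} {n : ℕ} (x : (t : Fin n) → (Fin t.val → Bool) → X)
    (ω : Fin n → Bool) (t : Fin n) : X :=
  x t fun s => ω ⟨s.val, s.isLt.trans t.isLt⟩

/-- The lifted projection: labelings realized by `O` along some path of the tree `x`. -/
def qseq {X : Type*} {n : ℕ} (x : (t : Fin n) → (Fin t.val → Bool) → X)
    (O : Set (X → Bool)) : Set (Fin n → Bool) :=
  {v | ∃ f ∈ O, ∃ ω : Fin n → Bool, ∀ t, v t = f (node x ω t)}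

/-- Risk of `O` on labels `σ` along the path `ω` of the tree `x`. -/
def seqRisk {X : Type*} {n : ℕ} (x : (t : Fin n) → (Fin t.val → Bool) → X)
    (O : Set (X → Bool)) (ω σ : Fin n → Bool) : ℝ :=
  sInf ((fun f => ((Finset.univ.filter fun t => f (node x ω t) ≠ σ t).card : ℝ) / n) '' O)

/-- Sequential soft falsifiability of `O` on the tree `x`. -/
def softFseq {X : Type*} {n : ℕ} (x : (t : Fin n) → (Fin t.val → Bool) → X)
    (O : Set (X → Bool)) : ℝ :=
  2 / 4 ^ n * ∑ ω : Fin n → Bool, ∑ σ : Fin n → Bool, seqRisk x O ω σ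

/-- Sequential hard falsifiability of `O` on the tree `x`. -/
def hardFseq {X : Type*} {n : ℕ} (x : (t : Fin n) → (Fin t.val → Bool) → X)
    (O : Set (X → Bool)) : ℝ :=
  1 - Real.logb 2 ((qseq x O).ncard) / n

/-- Sequential Rademacher complexity of `O` on the tree `x`. -/
def rademSeq {X : Type*} {n : ℕ} (x : (t : Fin n) → (Fin t.val → Bool) → X)
    (O : Set (X → Bool)) : ℝ :=
  ((2 : ℝ) ^ n)⁻¹ * ∑ ζ : Fin n → Bool,
    sSup ((fun f => (n : ℝ)⁻¹ * ∑ t, sgn (ζ t) * sgn (f (node x ζ t))) '' O)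

/-- `V` is a zero-cover of `O` on the tree `x`. -/
def IsZeroCover {X : Type*} {n : ℕ} (x : (t : Fin n) → (Fin t.val → Bool) → X)
    (O : Set (X → Bool)) (V : Set ((t : Fin n) → (Fin t.val → Bool) → Bool)) : Prop :=
  ∀ f ∈ O, ∀ ω : Fin n → Bool, ∃ v ∈ V, ∀ t : Fin n, node v ω t = f (node x ω t)

/-- The sequential covering number: minimum cardinality of a zero-cover. -/
def coverSeq {X : Type*} {n : ℕ} (x : (t : Fin n) → (Fin t.val → Bool) → X)
    (O : Set (X → Bool)) : ℕ :=
  sInf {k : ℕ | ∃ V, IsZeroCover x O V ∧ V.Finite ∧ V.ncard = k}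

/-- There is a zero-cover of `O` on `x` of cardinality
`|q̃(O,x)|`; hence `Cover_seq(O,x) ≤ |q̃(O,x)|`. -/
theorem stmt_9 {X : Type*} (n : ℕ) (hn : 1 ≤ n)
    (x : (t : Fin n) → (Fin t.val → Bool) → X) (O : Set (X → Bool))
    (hO : O.Nonempty) :
    (∃ V : Set ((t : Fin n) → (Fin t.val → Bool) → Bool),
      IsZeroCover x O V ∧ V.Finite ∧ V.ncard = (qseq x O).ncard) ∧
    coverSeq x O ≤ (qseq x O).ncard := by
  -- The cover consists of the constant-in-`ω` trees carrying the labelings in `q̃(O,x)`: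
  -- the labeling that `f` produces along `ω` is itself a member of the projection.
  have key : ∃ V : Set ((t : Fin n) → (Fin t.val → Bool) → Bool),
      IsZeroCover x O V ∧ V.Finite ∧ V.ncard = (qseq x O).ncard := by
    refine ⟨(fun (w : Fin n → Bool) t _ => w t) '' qseq x O, ?_, (Set.toFinite _).image _, ?_⟩
    · intro f hf ω
      exact ⟨_, ⟨fun t => f (node x ω t), ⟨f, hf, ω, fun _ => rfl⟩, rfl⟩, fun _ => rfl⟩
    · refine Set.ncard_image_of_injective _ fun w w' h => funext fun t => ?_
      exact congrFun (congrFun h t) fun _ => false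
  exact ⟨key, Nat.sInf_le key⟩
end
end

section
/- Suppose some path of the tree x⃗ visits n pairwise distinct points of X. On pairs (σ,ω) ∈ {−1,+1}^X × Ω^n define the equivalence (σ,ω) ~ (τ,ρ) iff σ(x_t(ω_{1:t−1})) = τ(x_t(ρ_{1:t−1})) for all t ≤ n. Then the map sending a pair to its labeling (σ(x_1), σ(x_2(ω_{1:1})), …, σ(x_n(ω_{1:n−1}))) induces a bijection between equivalence classes and {−1,+1}^n (so there are exactly 2^n effective hypotheses), a class has zero hard risk if and only if its labeling lies in q̃(O,x⃗), and consequently the information gain of the hard risk at error 0 equals n − log₂|q̃(O,x⃗)|, i.e. the sequential hard falsifiability equals 1 − (1/n)·log₂|q̃(O,x⃗)|. -/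
/-!
On a path `ρ` whose points are pairwise distinct, any prescribed labeling `v` extends to a hypothesis
`σ : X → Bool` with `σ (node x ρ t) = v t`, so the labeling map is surjective
(`labelMap_surjective`). Since `pairSetoid x` is the kernel of that map, its quotient is in bijection
with the `2 ^ n` labelings. The hard risk is an infimum of values `k / n` with `0 ≤ k ≤ n`, hence a
minimum, and it vanishes exactly when some pair in `O × Ωⁿ` reproduces the labeling without error,
which is membership in `qseq x O` (`hardRisk_eq_zero_iff`). By surjectivity the labelings of zero
hard risk are then precisely those in `qseq x O`, and the information gain is
`log₂ (2 ^ n) - log₂ |qseq x O|`.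
-/

open Finset

noncomputable section

/-- The labeling of a hypothesis-path pair `p = (σ, ω)` on the tree `x`. -/
def labelMap {X : Type*} {n : ℕ} (x : (t : Fin n) → (Fin t.val → Bool) → X)
    (p : (X → Bool) × (Fin n → Bool)) : Fin n → Bool :=
  fun t => p.1 (node x p.2 t)

/-- Two hypothesis-path pairs are equivalent iff they produce the same labeling. -/
def pairSetoid {X : Type*} {n : ℕ} (x : (t : Fin n) → (Fin t.val → Bool) → X) :
    Setoid ((X → Bool) × (Fin n → Bool)) where
  r p p' := labelMap x p = labelMap x p'
  iseqv := ⟨fun _ => rfl, Eq.symm, Eq.trans⟩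

/-- The hard risk of a hypothesis-path pair `p` for the lifted theory `O × Ωⁿ`. -/
def hardRisk {X : Type*} {n : ℕ} (x : (t : Fin n) → (Fin t.val → Bool) → X)
    (O : Set (X → Bool)) (p : (X → Bool) × (Fin n → Bool)) : ℝ :=
  sInf ((fun fb : (X → Bool) × (Fin n → Bool) =>
      ((Finset.univ.filter fun t => fb.1 (node x fb.2 t) ≠ labelMap x p t).card : ℝ) / n)
    '' (O ×ˢ (Set.univ : Set (Fin n → Bool))))

theorem labelMap_surjective {X : Type*} {n : ℕ} (x : (t : Fin n) → (Fin t.val → Bool) → X)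
    (ρ : Fin n → Bool) (hρ : Function.Injective fun t => node x ρ t) :
    Function.Surjective (labelMap x) := by
  intro v
  refine ⟨(Function.extend (fun t => node x ρ t) v fun _ => false, ρ), ?_⟩
  funext t
  exact hρ.extend_apply v (fun _ => false) t

/-- The number of effective hypotheses is the number of labelings once every labeling occurs. -/
theorem card_quotient_pairSetoid {X : Type*} {n : ℕ}
    (x : (t : Fin n) → (Fin t.val → Bool) → X) (h : Function.Surjective (labelMap x)) :
    Nat.card (Quotient (pairSetoid x)) = 2 ^ n := by
  have e : Quotient (pairSetoid x) ≃ (Fin n → Bool) :=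
    Setoid.quotientKerEquivOfSurjective (labelMap x) h
  rw [Nat.card_congr e]
  simp

/-- Nonemptiness of `O` is needed only for the forward direction: over an empty `O` the infimum
would take the junk value `0`. -/
theorem hardRisk_eq_zero_iff {X : Type*} {n : ℕ} (hn : 1 ≤ n)
    (x : (t : Fin n) → (Fin t.val → Bool) → X) (O : Set (X → Bool)) (hO : O.Nonempty)
    (p : (X → Bool) × (Fin n → Bool)) :
    hardRisk x O p = 0 ↔ labelMap x p ∈ qseq x O := by
  have hn' : (n : ℝ) ≠ 0 := by positivity
  constructor
  · intro h
    -- The risk depends only on the set of errors, so it takes finitely many values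
    -- and the infimum is attained.
    have hmem := Set.Nonempty.csInf_mem
      (s := (fun fb : (X → Bool) × (Fin n → Bool) =>
        ((Finset.univ.filter fun t => fb.1 (node x fb.2 t) ≠ labelMap x p t).card : ℝ) / n)
          '' (O ×ˢ (Set.univ : Set (Fin n → Bool))))
      ((hO.prod Set.univ_nonempty).image _)
      ((Set.finite_range fun s : Finset (Fin n) => (s.card : ℝ) / n).subset (by
        rintro _ ⟨fb, -, rfl⟩
        exact ⟨_, rfl⟩))
    obtain ⟨⟨f, b⟩, ⟨hf, -⟩, hfb⟩ := hmem
    have hz := hfb.trans h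
    simp only [div_eq_zero_iff, hn', or_false, Nat.cast_eq_zero, Finset.card_eq_zero,
      Finset.filter_eq_empty_iff, Finset.mem_univ, true_imp_iff, not_not] at hz
    exact ⟨f, hf, b, fun t => (hz (x := t)).symm⟩
  · rintro ⟨f, hf, b, hfb⟩
    refine IsLeast.csInf_eq ⟨⟨(f, b), ⟨hf, Set.mem_univ _⟩, ?_⟩, ?_⟩
    · simp [hfb]
    · rintro _ ⟨fb, -, rfl⟩
      positivity

/-- If some path of `x` visits `n` pairwise distinct points, then
the labeling map induces a bijection between effective hypotheses (equivalence
classes of pairs) and `{−1,+1}ⁿ` — so there are exactly `2ⁿ` effective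
hypotheses — a class has zero hard risk iff its labeling lies in `q̃(O,x)`, and
the information gain of the hard risk at error `0` is `n − log₂|q̃(O,x)|`, i.e. the
sequential hard falsifiability equals `1 − (1/n)·log₂|q̃(O,x)|`. -/
theorem stmt_10 {X : Type*} (n : ℕ) (hn : 1 ≤ n)
    (x : (t : Fin n) → (Fin t.val → Bool) → X) (O : Set (X → Bool))
    (hO : O.Nonempty) (ρ : Fin n → Bool)
    (hρ : Function.Injective fun t => node x ρ t) :
    Function.Surjective (labelMap x) ∧
    Nat.card (Quotient (pairSetoid x)) = 2 ^ n ∧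
    (∀ p : (X → Bool) × (Fin n → Bool),
      hardRisk x O p = 0 ↔ labelMap x p ∈ qseq x O) ∧
    Real.logb 2 (Nat.card (Quotient (pairSetoid x))) -
        Real.logb 2 ({v : Fin n → Bool |
          ∃ p, labelMap x p = v ∧ hardRisk x O p = 0}.ncard)
      = n - Real.logb 2 ((qseq x O).ncard) ∧
    (Real.logb 2 (Nat.card (Quotient (pairSetoid x))) -
        Real.logb 2 ({v : Fin n → Bool |
          ∃ p, labelMap x p = v ∧ hardRisk x O p = 0}.ncard)) / n
      = 1 - Real.logb 2 ((qseq x O).ncard) / n := by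
  have hsurj := labelMap_surjective x ρ hρ
  have hcard := card_quotient_pairSetoid x hsurj
  have hrisk := hardRisk_eq_zero_iff hn x O hO
  have hset : {v : Fin n → Bool | ∃ p, labelMap x p = v ∧ hardRisk x O p = 0} = qseq x O := by
    ext v
    constructor
    · rintro ⟨p, rfl, hp⟩
      exact (hrisk p).1 hp
    · intro hv
      obtain ⟨p, rfl⟩ := hsurj v
      exact ⟨p, rfl, (hrisk p).2 hv⟩
  have hlog : Real.logb 2 (Nat.card (Quotient (pairSetoid x))) = n := by
    rw [hcard]
    push_cast
    rw [Real.logb_pow, Real.logb_self_eq_one one_lt_two, mul_one]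
  have hn' : (n : ℝ) ≠ 0 := by positivity
  refine ⟨hsurj, hcard, hrisk, ?_, ?_⟩
  · rw [hset, hlog]
  · rw [hset, hlog, sub_div, div_self hn']
end
end

section
/- The sequential Rademacher complexity of a theory O on an X-valued tree x⃗ of depth n is bounded by the sequential covering number: Radem_seq(O|x⃗) ≤ √( 2·log₂ Cover_seq(O,x⃗) / n ). -/
/-!
This is Massart's finite-class lemma on a tree. Along each path `ζ` the supremum over `O` is at most
the maximum over a minimal zero-cover `V` of `Z_v(ζ) = ∑ ζ_t v_t(ζ_{<t})`. Since `v_t` depends only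
on earlier signs, `ζ ↦ (ζ_t v_t(ζ_{<t}))_t` is a bijection of the set of paths (`twist_bijective`),
so `Z_v` is distributed as a sum of independent signs and `E exp (r Z_v) = (cosh r)^n ≤ exp (n r²/2)`
(`sum_exp_le`). Summing over `V` gives `r n R ≤ log |V| + n r²/2` for the complexity `R` and every
`r > 0` (`mul_rademSeq_le`). The choice `r = R` yields `R² ≤ 2 log |V| / n`, and `log ≤ log₂` on
`[1, ∞)`.
-/

open Finset

noncomputable section

/-- Along every path, the signs `ζ_t` twisted by the predictable labels `v_t(ζ_{<t})`. -/
def twist {n : ℕ} (v : (t : Fin n) → (Fin t.val → Bool) → Bool)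
    (ζ : Fin n → Bool) : Fin n → Bool :=
  fun t => ζ t == node v ζ t

/-- The twist is a measure-preserving relabelling of paths: `ζ_t` is recovered from the twisted
sign once `ζ_{<t}` is known. -/
lemma twist_bijective {n : ℕ} (v : (t : Fin n) → (Fin t.val → Bool) → Bool) :
    Function.Bijective (twist v) := by
  refine Finite.injective_iff_bijective.mp fun ζ ξ h => ?_
  have key : ∀ k : ℕ, ∀ hk : k < n, ζ ⟨k, hk⟩ = ξ ⟨k, hk⟩ := by
    intro k
    induction k using Nat.strong_induction_on with
    | _ k ih =>
      intro hk
      have hnode : node v ζ ⟨k, hk⟩ = node v ξ ⟨k, hk⟩ := by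
        unfold node
        congr 1
        funext s
        exact ih s.val s.isLt _
      have ht := congrFun h ⟨k, hk⟩
      simp only [twist, hnode] at ht
      revert ht
      cases ζ ⟨k, hk⟩ <;> cases ξ ⟨k, hk⟩ <;> cases node v ξ ⟨k, hk⟩ <;> simp
  funext t
  exact key t.val t.isLt

lemma sgn_mul_sgn (a b : Bool) : sgn a * sgn b = sgn (a == b) := by
  cases a <;> cases b <;> simp [sgn]

/-- The sub-Gaussian moment bound for a single predictable sign sequence. -/
lemma sum_exp_le {n : ℕ} (v : (t : Fin n) → (Fin t.val → Bool) → Bool) (r : ℝ) :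
    ∑ ζ : Fin n → Bool, Real.exp (r * ∑ t, sgn (ζ t) * sgn (node v ζ t))
      ≤ 2 ^ n * Real.exp (n * (r ^ 2 / 2)) := by
  have h1 : ∑ ζ : Fin n → Bool, Real.exp (r * ∑ t, sgn (ζ t) * sgn (node v ζ t))
      = ∑ η : Fin n → Bool, ∏ t, Real.exp (r * sgn (η t)) := by
    rw [← (twist_bijective v).sum_comp fun η : Fin n → Bool => ∏ t, Real.exp (r * sgn (η t))]
    refine Finset.sum_congr rfl fun ζ _ => ?_
    rw [← Real.exp_sum, Finset.mul_sum]
    simp only [sgn_mul_sgn, twist]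
  have h2 : ∑ η : Fin n → Bool, ∏ t, Real.exp (r * sgn (η t)) = (2 * Real.cosh r) ^ n := by
    have h := Finset.prod_univ_sum (fun _ : Fin n => (Finset.univ : Finset Bool))
      (fun _ b => Real.exp (r * sgn b))
    rw [Fintype.piFinset_univ] at h
    rw [← h, Finset.prod_const, Finset.card_univ, Fintype.card_fin, Real.cosh_eq]
    simp only [Fintype.sum_bool, sgn]
    congr 1
    simp
    ring
  rw [h1, h2, mul_pow, Real.exp_nat_mul]
  gcongr
  exact Real.cosh_le_exp_half_sq r

lemma exists_zeroCover {X : Type*} {n : ℕ} (x : (t : Fin n) → (Fin t.val → Bool) → X)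
    (O : Set (X → Bool)) :
    ∃ V, IsZeroCover x O V ∧ V.Finite ∧ V.ncard = coverSeq x O :=
  Nat.sInf_mem (s := {k : ℕ | ∃ V, IsZeroCover x O V ∧ V.Finite ∧ V.ncard = k})
    ⟨_, Set.univ, fun f _ _ => ⟨fun t p => f (x t p), Set.mem_univ _, fun _ => rfl⟩,
      Set.finite_univ, rfl⟩

/-- Massart's finite-class bound, before optimizing over the scale `r`. -/
lemma mul_rademSeq_le {X : Type*} {n : ℕ} (hn : 1 ≤ n)
    (x : (t : Fin n) → (Fin t.val → Bool) → X) (O : Set (X → Bool)) (hO : O.Nonempty)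
    (V : Finset ((t : Fin n) → (Fin t.val → Bool) → Bool)) (hV : IsZeroCover x O V)
    (hcard : 0 < V.card) {r : ℝ} (hr : 0 < r) :
    r * n * rademSeq x O ≤ Real.log V.card + n * (r ^ 2 / 2) := by
  have hn' : (0 : ℝ) < n := by exact_mod_cast hn
  have hN : (0 : ℝ) < V.card := by exact_mod_cast hcard
  set c : ℝ := Real.log V.card + n * (r ^ 2 / 2) with hc
  have hexpc : Real.exp c = V.card * Real.exp (n * (r ^ 2 / 2)) := by
    rw [hc, Real.exp_add, Real.exp_log hN]
  set W : (Fin n → Bool) → ℝ := fun ζ =>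
    ∑ v ∈ V, Real.exp (r * ∑ t, sgn (ζ t) * sgn (node v ζ t)) with hW
  -- `a - c + 1 ≤ exp (a - c)` linearizes the exponential at the target value `c`,
  -- which replaces Jensen's inequality.
  have hpt : ∀ ζ : Fin n → Bool,
      sSup ((fun f => (n : ℝ)⁻¹ * ∑ t, sgn (ζ t) * sgn (f (node x ζ t))) '' O)
        ≤ (r * n)⁻¹ * (c - 1 + W ζ / Real.exp c) := by
    intro ζ
    refine csSup_le (hO.image _) ?_
    rintro _ ⟨f, hf, rfl⟩
    obtain ⟨v, hv, hvf⟩ := hV f hf ζ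
    have hle : Real.exp (r * ∑ t, sgn (ζ t) * sgn (f (node x ζ t))) ≤ W ζ := by
      simp only [← hvf]
      exact Finset.single_le_sum
        (f := fun v => Real.exp (r * ∑ t, sgn (ζ t) * sgn (node v ζ t)))
        (fun _ _ => (Real.exp_pos _).le) (Finset.mem_coe.mp hv)
    have h1 := Real.add_one_le_exp (r * ∑ t, sgn (ζ t) * sgn (f (node x ζ t)) - c)
    rw [Real.exp_sub] at h1
    have h2 := div_le_div_of_nonneg_right hle (Real.exp_pos c).le
    have h3 : (n : ℝ)⁻¹ * ∑ t, sgn (ζ t) * sgn (f (node x ζ t))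
        = (r * n)⁻¹ * (r * ∑ t, sgn (ζ t) * sgn (f (node x ζ t))) := by
      field_simp
    beta_reduce
    rw [h3]
    refine mul_le_mul_of_nonneg_left ?_ (by positivity)
    linarith
  have hWsum : ∑ ζ, W ζ ≤ 2 ^ n * Real.exp c := by
    rw [hW, Finset.sum_comm, hexpc]
    calc _ ≤ ∑ v ∈ V, 2 ^ n * Real.exp (n * (r ^ 2 / 2)) :=
          Finset.sum_le_sum fun v _ => sum_exp_le v r
      _ = _ := by rw [Finset.sum_const, nsmul_eq_mul]; ring
  have hsum := Finset.sum_le_sum fun ζ (_ : ζ ∈ Finset.univ) => hpt ζ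
  rw [← Finset.mul_sum, Finset.sum_add_distrib, ← Finset.sum_div, Finset.sum_const,
    Finset.card_univ, Fintype.card_fun, Fintype.card_bool, Fintype.card_fin, nsmul_eq_mul,
    Nat.cast_pow, Nat.cast_ofNat] at hsum
  have hWdiv : (∑ ζ, W ζ) / Real.exp c ≤ 2 ^ n := (div_le_iff₀ (Real.exp_pos c)).mpr hWsum
  have hrad : rademSeq x O ≤ (r * n)⁻¹ * c := by
    unfold rademSeq
    rw [inv_mul_le_iff₀ (by positivity)]
    refine hsum.trans ?_
    rw [mul_left_comm]
    refine mul_le_mul_of_nonneg_left ?_ (by positivity)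
    linarith
  rwa [← le_inv_mul_iff₀ (by positivity)]

/-- The sequential Rademacher complexity is bounded via the
sequential covering number: `Radem_seq(O|x) ≤ √(2·log₂ Cover_seq(O,x) / n)`. -/
theorem stmt_11 {X : Type*} (n : ℕ) (hn : 1 ≤ n)
    (x : (t : Fin n) → (Fin t.val → Bool) → X) (O : Set (X → Bool))
    (hO : O.Nonempty) :
    rademSeq x O ≤ Real.sqrt (2 * Real.logb 2 (coverSeq x O) / n) := by
  obtain ⟨V, hV, hfin, hcard⟩ := exists_zeroCover x O
  lift V to Finset ((t : Fin n) → (Fin t.val → Bool) → Bool) using hfin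
  rw [Set.ncard_coe_finset] at hcard
  have hpos : 0 < V.card := by
    obtain ⟨f, hf⟩ := hO
    obtain ⟨v, hv, -⟩ := hV f hf fun _ => true
    exact Finset.card_pos.mpr ⟨v, hv⟩
  rw [← hcard]
  rcases le_or_gt (rademSeq x O) 0 with h0 | h0
  · exact h0.trans (Real.sqrt_nonneg _)
  have hn' : (0 : ℝ) < n := by exact_mod_cast hn
  -- The scale equal to the complexity itself already gives the optimal bound.
  have key := mul_rademSeq_le hn x O hO V hV hpos h0
  have hlog : Real.log V.card ≤ Real.logb 2 V.card :=
    le_div_self (Real.log_nonneg (by exact_mod_cast hpos)) (Real.log_pos one_lt_two)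
      (by linarith [Real.log_two_lt_d9])
  refine Real.le_sqrt_of_sq_le ?_
  rw [le_div_iff₀ hn']
  nlinarith
end
end

section
/- Let μ be a Borel probability measure on the space {0,1}^ℕ of infinite binary sequences, let y ∈ {0,1}^ℕ, and let n ≥ 1 be such that μ(C_t) > 0 for all t ≤ n, where C_t denotes the cylinder set of sequences agreeing with y in their first t coordinates (C_0 being the whole space). Then the cumulative expected prediction error of the Bayes-optimal predictor is bounded by the negative log prior probability of the observed string: ∑_{t=1}^n ( 1 − μ(C_t)/μ(C_{t−1}) ) ≤ −ln μ(C_n). -/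
open MeasureTheory

/-- Generalization bound for Bayes-optimal (Solomonoff-style)
prediction: for a Borel probability measure `μ` on `{0,1}^ℕ`, a sequence `y` and
`n ≥ 1` with all cylinders `C_t` (`t ≤ n`) of positive measure, the cumulative
expected prediction error `∑_{t=1}^n (1 − μ(C_t)/μ(C_{t−1}))` is at most
`−ln μ(C_n)`. -/
theorem stmt_18 (μ : Measure (ℕ → Bool)) [IsProbabilityMeasure μ]
    (y : ℕ → Bool) (n : ℕ) (hn : 1 ≤ n)
    (hpos : ∀ t ≤ n, 0 < μ {z : ℕ → Bool | ∀ i < t, z i = y i}) :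
    ∑ t ∈ Finset.range n,
        (1 - (μ {z : ℕ → Bool | ∀ i < t + 1, z i = y i}).toReal /
              (μ {z : ℕ → Bool | ∀ i < t, z i = y i}).toReal)
      ≤ - Real.log ((μ {z : ℕ → Bool | ∀ i < n, z i = y i}).toReal) := by
  have hr : ∀ t ≤ n, 0 < (μ {z : ℕ → Bool | ∀ i < t, z i = y i}).toReal := fun t ht =>
    ENNReal.toReal_pos (hpos t ht).ne' (measure_ne_top μ _)
  clear hn hpos
  -- Bound each error `1 - r` by `-log r`; the logarithms of the ratios telescope to `log μ(C_n)`.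
  induction n with
  | zero => simp
  | succ k ih =>
    rw [Finset.sum_range_succ]
    have ih' := ih fun t ht => hr t (by omega)
    have ha := hr k (by omega)
    have hb := hr (k + 1) le_rfl
    have hlog := Real.log_le_sub_one_of_pos (div_pos hb ha)
    rw [Real.log_div hb.ne' ha.ne'] at hlog
    linarith
end
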